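/- Let H be a commutative connected graded k-Hopf algebra with Bernstein homomorphism β_H : H → H ⊗ QSym defined by β_H(h) = Σ_α ξ_α(h) ⊗ M_α, where ξ_α = m^{(k−1)} ∘ π_α ∘ Δ^{(k−1)} for α = (a₁,…,a_k). Then β_H ∘ S_H = (id_H ⊗ S_QSym) ∘ β_H, where S_H and S_QSym are the antipodes of H and QSym respectively. -/

import Mathlib

open TensorProduct

/-- A composition: a finite list of positive integers. -/
def IsComposition (α : List ℕ) : Prop := ∀ a ∈ α, 0 < a

section

variable {k H : Type*} [CommRing k] [Ring H] [HopfAlgebra k H]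

/-- For a `k`-algebra homomorphism `ζ : H → k` and graded projections `π n : H → H`, and a
composition `α = (a₁, …, a_m)`, the map `ζ_α : H → k` : the composite of the iterated
comultiplication `Δ^{(m-1)} : H → H^{⊗m}`, the projection `π_α = π_{a₁} ⊗ ⋯ ⊗ π_{a_m}`,
`ζ^{⊗m}`, and the canonical isomorphism `k^{⊗m} ≅ k` (written in its standard recursive
form). -/
noncomputable def zetaA (ζ : H →ₐ[k] k) (π : ℕ → H →ₗ[k] H) : List ℕ → (H →ₗ[k] k)
  | [] => Coalgebra.counit (R := k)
  | a :: t => LinearMap.mul' k k ∘ₗ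
      TensorProduct.map (ζ.toLinearMap ∘ₗ π a) (zetaA ζ π t) ∘ₗ Coalgebra.comul (R := k)

/-- Convolution product on `Hom_k(H, k)`: `f ⋆ g = m_k ∘ (f ⊗ g) ∘ Δ_H`. -/
noncomputable def convK (f g : H →ₗ[k] k) : H →ₗ[k] k :=
  LinearMap.mul' k k ∘ₗ TensorProduct.map f g ∘ₗ Coalgebra.comul (R := k)

/-- For graded projections `π n : H → H` and a composition `α = (a₁, …, a_m)`, the map
`ξ_α = m^{(m-1)} ∘ π_α ∘ Δ^{(m-1)} : H → H` (written in its standard recursive form). -/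
noncomputable def xiA (π : ℕ → H →ₗ[k] H) : List ℕ → (H →ₗ[k] H)
  | [] => Algebra.linearMap k H ∘ₗ Coalgebra.counit (R := k)
  | a :: t => LinearMap.mul' k H ∘ₗ
      TensorProduct.map (π a) (xiA π t) ∘ₗ Coalgebra.comul (R := k)

/-- Convolution product on `End_k(H)`: `f ⋆ g = m_H ∘ (f ⊗ g) ∘ Δ_H`. -/
noncomputable def convH (f g : H →ₗ[k] H) : H →ₗ[k] H :=
  LinearMap.mul' k H ∘ₗ TensorProduct.map f g ∘ₗ Coalgebra.comul (R := k)

end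

open TensorProduct

/-- The underlying `k`-module of the quasisymmetric functions: the free `k`-module with basis
indexed by finite lists of natural numbers (the monomial quasisymmetric functions `M_α` for
compositions `α`, i.e. lists with positive entries, form the monomial basis). -/
abbrev QSymM (k : Type*) [CommRing k] : Type _ := List ℕ →₀ k


/-- The monomial quasisymmetric function `M_α`, as a basis vector. -/
noncomputable def Mq (k : Type*) [CommRing k] (α : List ℕ) : QSymM k := Finsupp.single α 1

/-- The comultiplication of `QSym` (deconcatenation coproduct):
`Δ (M_β) = ∑ i, M_{(b₁,…,b_i)} ⊗ M_{(b_{i+1},…,b_ℓ)}`. -/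
noncomputable def comulQ (k : Type*) [CommRing k] : QSymM k →ₗ[k] QSymM k ⊗[k] QSymM k :=
  Finsupp.lsum k fun β => LinearMap.toSpanSingleton k _
    (∑ i ∈ Finset.range (β.length + 1), Mq k (β.take i) ⊗ₜ[k] Mq k (β.drop i))

/-- The counit of `QSym`: `ε (M_α) = 1` if `α = ()` and `0` otherwise. -/
noncomputable def counitQ (k : Type*) [CommRing k] : QSymM k →ₗ[k] k :=
  Finsupp.lsum k fun β => if β = [] then LinearMap.id else 0

/-- The algebra homomorphism `ε_P : QSym → k`, `f ↦ f (1, 0, 0, …)`: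
it sends `M_α ↦ 1` if `α` has length `≤ 1`, and `M_α ↦ 0` otherwise. -/
noncomputable def epsP (k : Type*) [CommRing k] : QSymM k →ₗ[k] k :=
  Finsupp.lsum k fun β => if β.length ≤ 1 then LinearMap.id else 0

/-- The projection of `QSym` onto its homogeneous component of degree `n`. -/
noncomputable def piQ (k : Type*) [CommRing k] (n : ℕ) : QSymM k →ₗ[k] QSymM k :=
  Finsupp.lsum k fun β => if β.sum = n then LinearMap.toSpanSingleton k _ (Mq k β) else 0

section QSymProduct

variable (k : Type*) [CommRing k]

/-- Prepending an entry to the indexing composition, linearly extended. -/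
noncomputable def mapConsQ (z : ℕ) : QSymM k →ₗ[k] QSymM k :=
  Finsupp.lmapDomain k k (fun l => z :: l)

/-- The quasi-shuffle (overlapping shuffle) product of two monomial quasisymmetric functions,
defined by the usual recursion; this is the product of `QSym` on the monomial basis. -/
noncomputable def qshuffle : List ℕ → List ℕ → QSymM k
  | [], b => Finsupp.single b 1
  | a :: as, [] => Finsupp.single (a :: as) 1
  | x :: xs, y :: ys =>
      mapConsQ k x (qshuffle xs (y :: ys)) + mapConsQ k y (qshuffle (x :: xs) ys) +
        mapConsQ k (x + y) (qshuffle xs ys)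
  termination_by a b => a.length + b.length

/-- The multiplication of `QSym`, as a linear map on the tensor square. -/
noncomputable def mulQ : QSymM k ⊗[k] QSymM k →ₗ[k] QSymM k :=
  TensorProduct.lift
    (Finsupp.lsum k fun α => LinearMap.toSpanSingleton k (QSymM k →ₗ[k] QSymM k)
      (Finsupp.lsum k fun β => LinearMap.toSpanSingleton k (QSymM k) (qshuffle k α β)))

/-- The unit of `QSym`. -/
noncomputable def unitQ : k →ₗ[k] QSymM k :=
  LinearMap.toSpanSingleton k (QSymM k) (Mq k [])

end QSymProduct

/-!
Work over the convolution algebra `R = End_k(H)` and consider the formal sum `B = ∑ ξ_α ⊗ M_α` in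
the completion of `R ⊗ QSym`. Deconcatenation and `ξ_{αβ} = ξ_α ⋆ ξ_β` show that
`(id ⊗ S_QSym) B` is a left inverse of `B`. On the other hand, the coefficient of `M_γ` in
`M_α M_β` counts the ways of splitting each entry `c = i + j` of `γ` so that the nonzero `i` form
`α` and the nonzero `j` form `β`. As `H` is commutative, `ξ_γ(x y) = ∑ ξ_α(x) ξ_β(y)` over the same
splittings, so `∑ (ξ_α ∘ S_H) ⊗ M_α` is a left inverse of `B` too. The degree zero part of `B` is
`1 ⊗ 1`, so `B` can be cancelled degree by degree. Evaluating at `h` gives the theorem.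
-/

section Compositions

open Finset.HasAntidiagonal (antidiagonal mem_antidiagonal)

lemma isComposition_cons {a : ℕ} {α : List ℕ} :
    IsComposition (a :: α) ↔ 0 < a ∧ IsComposition α :=
  List.forall_mem_cons

lemma isComposition_append {α β : List ℕ} :
    IsComposition (α ++ β) ↔ IsComposition α ∧ IsComposition β :=
  List.forall_mem_append

lemma IsComposition.sum_eq_zero_iff {α : List ℕ} (hα : IsComposition α) :
    α.sum = 0 ↔ α = [] := by
  cases α with
  | nil => simp
  | cons a t => simp [(isComposition_cons.1 hα).1.ne']

/-- The compositions of `n`, as a finite set of lists. -/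
def compositionLists (n : ℕ) : Finset (List ℕ) :=
  (Finset.univ : Finset (Composition n)).map ⟨Composition.blocks, fun _ _ => Composition.ext⟩

lemma mem_compositionLists {n : ℕ} {α : List ℕ} :
    α ∈ compositionLists n ↔ IsComposition α ∧ α.sum = n := by
  simp only [compositionLists, Finset.mem_map, Finset.mem_univ, true_and]
  exact ⟨fun ⟨c, hc⟩ => hc ▸ ⟨fun _ => c.blocks_pos, c.blocks_sum⟩,
    fun ⟨hα, hn⟩ => ⟨⟨α, @hα, hn⟩, rfl⟩⟩

lemma compositionLists_zero : compositionLists 0 = {[]} := by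
  ext α
  rw [mem_compositionLists, Finset.mem_singleton]
  exact ⟨fun ⟨hα, h0⟩ => hα.sum_eq_zero_iff.1 h0, by rintro rfl; simp [IsComposition]⟩

/-- The pairs of compositions of total size `n`: they index the monomial basis of the degree `n`
part of `QSym ⊗ QSym`. -/
def compositionPairs (n : ℕ) : Finset (List ℕ × List ℕ) :=
  (antidiagonal n).biUnion fun p => compositionLists p.1 ×ˢ compositionLists p.2

lemma mem_compositionPairs {n : ℕ} {q : List ℕ × List ℕ} :
    q ∈ compositionPairs n ↔
      IsComposition q.1 ∧ IsComposition q.2 ∧ q.1.sum + q.2.sum = n := by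
  simp only [compositionPairs, Finset.mem_biUnion, mem_antidiagonal, Finset.mem_product,
    mem_compositionLists, Prod.exists]
  grind

lemma sum_antidiagonal_sum_compositionLists {M : Type*} [AddCommMonoid M] (n : ℕ)
    (F : List ℕ → List ℕ → M) :
    ∑ p ∈ antidiagonal n, ∑ α ∈ compositionLists p.1, ∑ β ∈ compositionLists p.2, F α β =
      ∑ q ∈ compositionPairs n, F q.1 q.2 := by
  have hdisj : (antidiagonal n : Set (ℕ × ℕ)).PairwiseDisjoint
      fun p => compositionLists p.1 ×ˢ compositionLists p.2 := by
    intro p _ p' _ hne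
    refine Finset.disjoint_left.2 fun q hq hq' => hne ?_
    rw [Finset.mem_product, mem_compositionLists, mem_compositionLists] at hq hq'
    exact Prod.ext (hq.1.2.symm.trans hq'.1.2) (hq.2.2.symm.trans hq'.2.2)
  simp only [compositionPairs, Finset.sum_biUnion hdisj, Finset.sum_product]

lemma sum_compositionLists_sum_take_drop {M : Type*} [AddCommMonoid M] (n : ℕ)
    (F : List ℕ → List ℕ → M) :
    ∑ γ ∈ compositionLists n, ∑ i ∈ Finset.range (γ.length + 1), F (γ.take i) (γ.drop i) =
      ∑ q ∈ compositionPairs n, F q.1 q.2 := by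
  rw [Finset.sum_sigma']
  refine Finset.sum_nbij' (fun x => (x.1.take x.2, x.1.drop x.2))
    (fun q => ⟨q.1 ++ q.2, q.1.length⟩) ?_ ?_ ?_ ?_ fun _ _ => rfl
  · rintro ⟨γ, i⟩ hγ
    rw [Finset.mem_sigma, mem_compositionLists] at hγ
    rw [mem_compositionPairs, ← List.sum_append, List.take_append_drop, ← and_assoc,
      ← isComposition_append, List.take_append_drop]
    exact hγ.1
  · rintro ⟨α, β⟩ hq
    rw [mem_compositionPairs] at hq
    simp only [Finset.mem_sigma, mem_compositionLists, isComposition_append, List.sum_append,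
      List.length_append, Finset.mem_range]
    exact ⟨⟨⟨hq.1, hq.2.1⟩, hq.2.2⟩, by lia⟩
  · rintro ⟨γ, i⟩ hγ
    have hi : i ≤ γ.length := by
      simpa [Nat.lt_succ_iff] using (Finset.mem_sigma.1 hγ).2
    simp [hi]
  · simp

lemma finsum_mem_isComposition {M : Type*} [AddCommMonoid M] (N : ℕ) {f : List ℕ → M}
    (hf : ∀ α, N < α.sum → f α = 0) :
    ∑ᶠ α ∈ {α : List ℕ | IsComposition α}, f α =
      ∑ n ∈ Finset.range (N + 1), ∑ α ∈ compositionLists n, f α := by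
  have hdisj : (Finset.range (N + 1) : Set ℕ).PairwiseDisjoint compositionLists := by
    intro m _ n _ hne
    refine Finset.disjoint_left.2 fun α hm hn => hne ?_
    exact (mem_compositionLists.1 hm).2.symm.trans (mem_compositionLists.1 hn).2
  rw [← Finset.sum_biUnion hdisj]
  refine finsum_mem_eq_sum_of_inter_support_eq f ?_
  ext α
  have hsupp : f α ≠ 0 → α.sum < N + 1 := fun h => by
    by_contra hlt
    exact h (hf α (by lia))
  simp only [Set.mem_inter_iff, Set.mem_ofPred_eq, Function.mem_support, Finset.mem_coe,
    Finset.mem_biUnion, Finset.mem_range, mem_compositionLists]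
  grind

end Compositions

section Splittings

open Finset.HasAntidiagonal (antidiagonal mem_antidiagonal)

/-- The ways of splitting every entry `c` of a list of naturals as `c = i + j`. -/
def splittings : List ℕ → Finset (List (ℕ × ℕ))
  | [] => {[]}
  | c :: t => (antidiagonal c ×ˢ splittings t).map
      ⟨fun p => p.1 :: p.2, fun _ _ h => Prod.ext (List.cons.inj h).1 (List.cons.inj h).2⟩

lemma sum_splittings_nil {M : Type*} [AddCommMonoid M] (F : List (ℕ × ℕ) → M) :
    ∑ w ∈ splittings [], F w = F [] := by
  simp [splittings]

lemma sum_splittings_cons {M : Type*} [AddCommMonoid M] (c : ℕ) (t : List ℕ)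
    (F : List (ℕ × ℕ) → M) :
    ∑ w ∈ splittings (c :: t), F w =
      ∑ p ∈ antidiagonal c, ∑ w ∈ splittings t, F (p :: w) :=
  (Finset.sum_map _ _ F).trans (Finset.sum_product _ _ _)

lemma sum_map_fst_add_sum_map_snd {γ : List ℕ} {w : List (ℕ × ℕ)} (hw : w ∈ splittings γ) :
    (w.map Prod.fst).sum + (w.map Prod.snd).sum = γ.sum := by
  induction γ generalizing w with
  | nil => simp_all [splittings]
  | cons c t ih =>
    obtain ⟨⟨p, v⟩, hpv, rfl⟩ := Finset.mem_map.1 hw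
    obtain ⟨hp, hv⟩ := Finset.mem_product.1 hpv
    rw [mem_antidiagonal] at hp
    change ((p :: v).map Prod.fst).sum + ((p :: v).map Prod.snd).sum = _
    have := ih hv
    simp only [List.map_cons, List.sum_cons]
    lia

/-- The composition obtained from a list of naturals by erasing its zeros. -/
def eraseZeros (l : List ℕ) : List ℕ := l.filter (· ≠ 0)

lemma isComposition_eraseZeros (l : List ℕ) : IsComposition (eraseZeros l) := fun a ha =>
  Nat.pos_of_ne_zero (by simpa using (List.mem_filter.1 ha).2)

lemma sum_eraseZeros (l : List ℕ) : (eraseZeros l).sum = l.sum := by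
  induction l with
  | nil => rfl
  | cons a t ih =>
    by_cases ha : a = 0 <;> simp_all [eraseZeros]

/-- The pair of compositions `(α, β)` into which `w ∈ splittings γ` splits `γ`. In the Hopf
algebra dual to `QSym`, whose basis element of index `(c₁, …, c_m)` is a product of `m` divided
powers of sizes `c₁, …, c_m`, the coproduct is `∑ α ⊗ β` over all splittings of `γ`. -/
def splittingParts (w : List (ℕ × ℕ)) : List ℕ × List ℕ :=
  (eraseZeros (w.map Prod.fst), eraseZeros (w.map Prod.snd))

lemma splittingParts_mem_compositionPairs {γ : List ℕ} {w : List (ℕ × ℕ)}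
    (hw : w ∈ splittings γ) : splittingParts w ∈ compositionPairs γ.sum :=
  mem_compositionPairs.2 ⟨isComposition_eraseZeros _, isComposition_eraseZeros _, by
    simp only [splittingParts, sum_eraseZeros, sum_map_fst_add_sum_map_snd hw]⟩

lemma splittingParts_cons (p : ℕ × ℕ) (w : List (ℕ × ℕ)) :
    splittingParts (p :: w) =
      (if p.1 = 0 then (splittingParts w).1 else p.1 :: (splittingParts w).1,
        if p.2 = 0 then (splittingParts w).2 else p.2 :: (splittingParts w).2) := by
  simp [splittingParts, eraseZeros, List.filter_cons]

lemma splittingParts_cons_ne_nil_nil {p : ℕ × ℕ} (hp : 0 < p.1 + p.2) (w : List (ℕ × ℕ)) :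
    splittingParts (p :: w) ≠ ([], []) := by
  grind [splittingParts_cons]

section IndicatorRecursion

variable (R : Type*) [AddMonoidWithOne R] {x y : ℕ} {p : ℕ × ℕ}

lemma ite_splittingParts_cons_eq_nil_cons (hy : 0 < y) (ys : List ℕ)
    (hp : 0 < p.1 + p.2) (w : List (ℕ × ℕ)) :
    (if splittingParts (p :: w) = ([], y :: ys) then (1 : R) else 0) =
      if p = (0, y) then if splittingParts w = ([], ys) then 1 else 0 else 0 := by
  grind [splittingParts_cons]

lemma ite_splittingParts_cons_eq_cons_nil (hx : 0 < x) (xs : List ℕ)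
    (hp : 0 < p.1 + p.2) (w : List (ℕ × ℕ)) :
    (if splittingParts (p :: w) = (x :: xs, []) then (1 : R) else 0) =
      if p = (x, 0) then if splittingParts w = (xs, []) then 1 else 0 else 0 := by
  grind [splittingParts_cons]

lemma ite_splittingParts_cons_eq_cons_cons (hx : 0 < x) (hy : 0 < y) (xs ys : List ℕ)
    (hp : 0 < p.1 + p.2) (w : List (ℕ × ℕ)) :
    (if splittingParts (p :: w) = (x :: xs, y :: ys) then (1 : R) else 0) =
      (if p = (x, 0) then if splittingParts w = (xs, y :: ys) then 1 else 0 else 0) +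
        (if p = (0, y) then if splittingParts w = (x :: xs, ys) then 1 else 0 else 0) +
          (if p = (x, y) then if splittingParts w = (xs, ys) then 1 else 0 else 0) := by
  grind [splittingParts_cons]

end IndicatorRecursion

end Splittings

section QSym

open Finset.HasAntidiagonal (antidiagonal mem_antidiagonal)

variable (k : Type*) [CommRing k]

lemma mapConsQ_apply_nil (z : ℕ) (f : QSymM k) : mapConsQ k z f [] = 0 :=
  Finsupp.mapDomain_of_notMem_range _ _ (by simp)

lemma mapConsQ_apply_cons (z c : ℕ) (t : List ℕ) (f : QSymM k) :
    mapConsQ k z f (c :: t) = if z = c then f t else 0 := by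
  split_ifs with h
  · rw [h]
    exact Finsupp.mapDomain_apply (List.cons_injective) f t
  · exact Finsupp.mapDomain_of_notMem_range _ _ (by simp [h])

lemma mulQ_Mq_tmul_Mq (α β : List ℕ) : mulQ k (Mq k α ⊗ₜ[k] Mq k β) = qshuffle k α β := by
  simp [mulQ, Mq]

lemma qshuffle_nil (α : List ℕ) : qshuffle k α [] = Mq k α := by
  cases α <;> simp [qshuffle, Mq]

lemma mulQ_tmul_Mq_nil (f : QSymM k) : mulQ k (f ⊗ₜ[k] Mq k []) = f := by
  have hbasis : mulQ k ∘ₗ (TensorProduct.mk k _ _).flip (Mq k []) = LinearMap.id := by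
    refine Finsupp.lhom_ext' fun α => LinearMap.ext_ring ?_
    change mulQ k (Mq k α ⊗ₜ[k] Mq k []) = Mq k α
    rw [mulQ_Mq_tmul_Mq, qshuffle_nil]
  exact LinearMap.congr_fun hbasis f

variable {k}

lemma mem_compositionLists_of_qshuffle_ne_zero {α β γ : List ℕ} (hα : IsComposition α)
    (hβ : IsComposition β) (hγ : qshuffle k α β γ ≠ 0) :
    γ ∈ compositionLists (α.sum + β.sum) := by
  rw [mem_compositionLists]
  induction α, β using qshuffle.induct generalizing γ with
  | case1 β =>
    rw [qshuffle, Finsupp.single_apply_ne_zero] at hγ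
    simp_all
  | case2 a α =>
    rw [qshuffle, Finsupp.single_apply_ne_zero] at hγ
    simp_all
  | case3 x xs y ys ih₁ ih₂ ih₃ =>
    have hx := isComposition_cons.1 hα
    have hy := isComposition_cons.1 hβ
    cases γ with
    | nil => simp [qshuffle, mapConsQ_apply_nil] at hγ
    | cons c t =>
      simp only [qshuffle, Finsupp.add_apply, mapConsQ_apply_cons] at hγ
      have hcases : (x = c ∧ qshuffle k xs (y :: ys) t ≠ 0) ∨
          (y = c ∧ qshuffle k (x :: xs) ys t ≠ 0) ∨ (x + y = c ∧ qshuffle k xs ys t ≠ 0) := by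
        by_contra! h
        simp_all
      simp only [isComposition_cons, List.sum_cons] at ih₁ ih₂ ih₃ hα hβ ⊢
      rcases hcases with ⟨rfl, ht⟩ | ⟨rfl, ht⟩ | ⟨rfl, ht⟩
      · have := ih₁ hx.2 hy ht
        grind
      · have := ih₂ hx hy.2 ht
        grind
      · have := ih₃ hx.2 hy.2 ht
        grind

lemma sum_antidiagonal_sum_ite {ι M : Type*} [AddCommMonoid M] (c : ℕ) (q : ℕ × ℕ)
    (s : Finset ι) (F : ι → M) :
    ∑ p ∈ antidiagonal c, ∑ w ∈ s, (if p = q then F w else 0) =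
      if q.1 + q.2 = c then ∑ w ∈ s, F w else 0 := by
  rw [Finset.sum_comm]
  simp [Finset.sum_ite_eq']

lemma qshuffle_apply {α β γ : List ℕ} (hα : IsComposition α) (hβ : IsComposition β)
    (hγ : IsComposition γ) :
    qshuffle k α β γ = ∑ w ∈ splittings γ, if splittingParts w = (α, β) then 1 else 0 := by
  induction γ generalizing α β with
  | nil =>
    rw [sum_splittings_nil]
    cases α <;> cases β <;>
      simp [qshuffle, mapConsQ_apply_nil, splittingParts, eraseZeros]
  | cons c t ih =>
    obtain ⟨hc, ht⟩ := isComposition_cons.1 hγ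
    have hpos : ∀ p ∈ antidiagonal c, 0 < p.1 + p.2 := fun p hp =>
      (mem_antidiagonal.1 hp).symm ▸ hc
    rw [sum_splittings_cons]
    rcases α with _ | ⟨x, xs⟩ <;> rcases β with _ | ⟨y, ys⟩
    · rw [Finset.sum_eq_zero fun p hp => Finset.sum_eq_zero fun w _ =>
        if_neg (splittingParts_cons_ne_nil_nil (hpos p hp) w)]
      simp [qshuffle]
    · obtain ⟨hy, hys⟩ := isComposition_cons.1 hβ
      rw [Finset.sum_congr rfl fun p hp => Finset.sum_congr rfl fun w _ =>
        ite_splittingParts_cons_eq_nil_cons k hy ys (hpos p hp) w]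
      simp only [sum_antidiagonal_sum_ite, ← ih hα hys ht, qshuffle, zero_add,
        Finsupp.single_apply, List.cons.injEq, ite_and]
    · obtain ⟨hx, hxs⟩ := isComposition_cons.1 hα
      rw [Finset.sum_congr rfl fun p hp => Finset.sum_congr rfl fun w _ =>
        ite_splittingParts_cons_eq_cons_nil k hx xs (hpos p hp) w]
      simp only [sum_antidiagonal_sum_ite, ← ih hxs hβ ht, add_zero,
        qshuffle_nil, Mq, Finsupp.single_apply, List.cons.injEq, ite_and]
    · obtain ⟨hx, hxs⟩ := isComposition_cons.1 hα
      obtain ⟨hy, hys⟩ := isComposition_cons.1 hβ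
      rw [Finset.sum_congr rfl fun p hp => Finset.sum_congr rfl fun w _ =>
        ite_splittingParts_cons_eq_cons_cons k hx hy xs ys (hpos p hp) w]
      simp only [Finset.sum_add_distrib, sum_antidiagonal_sum_ite, ← ih hxs hβ ht,
        ← ih hα hys ht, ← ih hxs hys ht, qshuffle, Finsupp.add_apply, mapConsQ_apply_cons,
        add_zero, zero_add]

lemma qshuffle_eq_sum {α β : List ℕ} (hα : IsComposition α) (hβ : IsComposition β) :
    qshuffle k α β = ∑ γ ∈ compositionLists (α.sum + β.sum), ∑ w ∈ splittings γ,
      if splittingParts w = (α, β) then Mq k γ else 0 := by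
  have hsupp : (qshuffle k α β).support ⊆ compositionLists (α.sum + β.sum) := fun γ hγ =>
    mem_compositionLists_of_qshuffle_ne_zero hα hβ (Finsupp.mem_support_iff.1 hγ)
  rw [← Finsupp.sum_single (qshuffle k α β), Finsupp.sum_of_support_subset _ hsupp _ (by simp)]
  refine Finset.sum_congr rfl fun γ hγ => ?_
  rw [qshuffle_apply hα hβ (mem_compositionLists.1 hγ).1, Finsupp.single_finsetSum]
  exact Finset.sum_congr rfl fun w _ => by split_ifs <;> simp [Mq]

end QSym

section Series

open Finset.HasAntidiagonal (antidiagonal mem_antidiagonal)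

variable {k A : Type*} [CommRing k] [Ring A] [Algebra k A]

/-- The multiplication of the `k`-algebra `A ⊗ QSym`. -/
noncomputable def tensorMulQ :
    A ⊗[k] QSymM k →ₗ[k] A ⊗[k] QSymM k →ₗ[k] A ⊗[k] QSymM k :=
  TensorProduct.map₂ (LinearMap.mul k A) (TensorProduct.curry (mulQ k))

/-- The degree `n` component `∑ f(α) ⊗ M_α`, over the compositions `α` of `n`, of the formal sum
`∑ f(α) ⊗ M_α` over all compositions. Such a formal sum has infinitely many terms, so it is encoded
as the family of its components. -/
noncomputable def qsymSeries (f : List ℕ → A) (n : ℕ) : A ⊗[k] QSymM k :=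
  ∑ α ∈ compositionLists n, f α ⊗ₜ[k] Mq k α

/-- The Cauchy product of two formal sums over `A ⊗ QSym` given by their graded components. -/
noncomputable def seriesMul (u v : ℕ → A ⊗[k] QSymM k) (n : ℕ) : A ⊗[k] QSymM k :=
  ∑ p ∈ antidiagonal n, tensorMulQ (u p.1) (v p.2)

lemma tensorMulQ_tmul_tmul (a b : A) (x y : QSymM k) :
    tensorMulQ (a ⊗ₜ[k] x) (b ⊗ₜ[k] y) = (a * b) ⊗ₜ[k] mulQ k (x ⊗ₜ[k] y) := by
  simp [tensorMulQ]

lemma tensorMulQ_one_tmul_Mq_nil (x : A ⊗[k] QSymM k) :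
    tensorMulQ x ((1 : A) ⊗ₜ[k] Mq k []) = x := by
  induction x using TensorProduct.induction_on with
  | zero => simp
  | tmul a f => rw [tensorMulQ_tmul_tmul, mul_one, mulQ_tmul_Mq_nil]
  | add x y hx hy => rw [map_add, LinearMap.add_apply, hx, hy]

lemma qsymSeries_zero (f : List ℕ → A) : qsymSeries f 0 = f [] ⊗ₜ[k] Mq k [] := by
  rw [qsymSeries, compositionLists_zero, Finset.sum_singleton]

lemma seriesMul_right_cancel {u v w : ℕ → A ⊗[k] QSymM k} (hw : w 0 = 1 ⊗ₜ[k] Mq k [])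
    (h : ∀ n, seriesMul u w n = seriesMul v w n) (n : ℕ) : u n = v n := by
  induction n using Nat.strong_induction_on with
  | h n ih =>
    have hn := h n
    simp only [seriesMul, Finset.Nat.sum_antidiagonal_eq_sum_range_succ_mk, Finset.sum_range_succ,
      Nat.sub_self, hw, tensorMulQ_one_tmul_Mq_nil] at hn
    have hlt : ∑ i ∈ Finset.range n, tensorMulQ (u i) (w (n - i)) =
        ∑ i ∈ Finset.range n, tensorMulQ (v i) (w (n - i)) :=
      Finset.sum_congr rfl fun i hi => by rw [ih i (Finset.mem_range.1 hi)]
    exact add_left_cancel (hlt ▸ hn)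

lemma seriesMul_lTensor_qsymSeries (L : QSymM k →ₗ[k] QSymM k) (f g : List ℕ → A) (n : ℕ) :
    seriesMul (fun n => L.lTensor A (qsymSeries f n)) (qsymSeries g) n =
      ∑ q ∈ compositionPairs n, (f q.1 * g q.2) ⊗ₜ[k] mulQ k (L (Mq k q.1) ⊗ₜ[k] Mq k q.2) := by
  rw [← sum_antidiagonal_sum_compositionLists n fun α β =>
    (f α * g β) ⊗ₜ[k] mulQ k (L (Mq k α) ⊗ₜ[k] Mq k β)]
  simp only [seriesMul, qsymSeries, map_sum, LinearMap.sum_apply, LinearMap.lTensor_tmul,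
    tensorMulQ_tmul_tmul]
  exact Finset.sum_congr rfl fun p _ => Finset.sum_comm

lemma seriesMul_qsymSeries (f g : List ℕ → A) (n : ℕ) :
    seriesMul (k := k) (qsymSeries f) (qsymSeries g) n =
      qsymSeries (fun γ => ∑ w ∈ splittings γ, f (splittingParts w).1 * g (splittingParts w).2)
        n := by
  have hpairs := seriesMul_lTensor_qsymSeries (LinearMap.id (R := k)) f g n
  simp only [LinearMap.lTensor_id, LinearMap.id_apply, mulQ_Mq_tmul_Mq] at hpairs
  have hterm : ∀ q ∈ compositionPairs n, (f q.1 * g q.2) ⊗ₜ[k] qshuffle k q.1 q.2 =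
      ∑ γ ∈ compositionLists n, ∑ w ∈ splittings γ,
        if splittingParts w = q then (f q.1 * g q.2) ⊗ₜ[k] Mq k γ else 0 := by
    intro q hq
    obtain ⟨h₁, h₂, hn⟩ := mem_compositionPairs.1 hq
    simp only [qshuffle_eq_sum h₁ h₂, hn, TensorProduct.tmul_sum, TensorProduct.tmul_ite]
  rw [hpairs, Finset.sum_congr rfl hterm, Finset.sum_comm]
  refine Finset.sum_congr rfl fun γ hγ => ?_
  rw [Finset.sum_comm, TensorProduct.sum_tmul]
  refine Finset.sum_congr rfl fun w hw => ?_
  have hmem := splittingParts_mem_compositionPairs hw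
  rw [(mem_compositionLists.1 hγ).2] at hmem
  rw [Finset.sum_ite_eq, if_pos hmem]

variable {SQ : QSymM k →ₗ[k] QSymM k}

lemma sum_mulQ_antipode_take_tmul_drop
    (hSQ : mulQ k ∘ₗ TensorProduct.map SQ LinearMap.id ∘ₗ comulQ k = unitQ k ∘ₗ counitQ k)
    (γ : List ℕ) :
    ∑ i ∈ Finset.range (γ.length + 1), mulQ k (SQ (Mq k (γ.take i)) ⊗ₜ[k] Mq k (γ.drop i)) =
      if γ = [] then Mq k [] else 0 := by
  have h := LinearMap.congr_fun hSQ (Mq k γ)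
  split_ifs with hγ <;> simpa [comulQ, counitQ, unitQ, Mq, hγ] using h

lemma seriesMul_lTensor_antipode_qsymSeries
    (hSQ : mulQ k ∘ₗ TensorProduct.map SQ LinearMap.id ∘ₗ comulQ k = unitQ k ∘ₗ counitQ k)
    {f : List ℕ → A} (hf_nil : f [] = 1) (hf_append : ∀ α β, f (α ++ β) = f α * f β) (n : ℕ) :
    seriesMul (fun n => SQ.lTensor A (qsymSeries f n)) (qsymSeries f) n =
      qsymSeries (fun γ => if γ = [] then 1 else 0) n := by
  rw [seriesMul_lTensor_qsymSeries, ← sum_compositionLists_sum_take_drop n fun α β =>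
    (f α * f β) ⊗ₜ[k] mulQ k (SQ (Mq k α) ⊗ₜ[k] Mq k β)]
  refine Finset.sum_congr rfl fun γ _ => ?_
  simp only [← hf_append, List.take_append_drop, ← TensorProduct.tmul_sum,
    sum_mulQ_antipode_take_tmul_drop hSQ]
  split_ifs with hγ
  · rw [hγ, hf_nil]
  · rw [TensorProduct.tmul_zero, TensorProduct.zero_tmul]

theorem qsymSeries_eq_lTensor_antipode
    (hSQ : mulQ k ∘ₗ TensorProduct.map SQ LinearMap.id ∘ₗ comulQ k = unitQ k ∘ₗ counitQ k)
    {f g : List ℕ → A} (hf_nil : f [] = 1) (hf_append : ∀ α β, f (α ++ β) = f α * f β)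
    (hgf : ∀ γ, IsComposition γ →
      ∑ w ∈ splittings γ, g (splittingParts w).1 * f (splittingParts w).2 =
        if γ = [] then 1 else 0)
    (n : ℕ) : qsymSeries g n = SQ.lTensor A (qsymSeries f n) := by
  have hf_zero : qsymSeries (k := k) f 0 = 1 ⊗ₜ[k] Mq k [] := by rw [qsymSeries_zero, hf_nil]
  refine seriesMul_right_cancel (v := fun n => SQ.lTensor A (qsymSeries f n)) hf_zero
    (fun n => ?_) n
  rw [seriesMul_lTensor_antipode_qsymSeries hSQ hf_nil hf_append, seriesMul_qsymSeries]
  exact Finset.sum_congr rfl fun γ hγ =>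
    congrArg (· ⊗ₜ[k] Mq k γ) (hgf γ (mem_compositionLists.1 hγ).1)

end Series

section BernsteinCoefficients

open WithConv Coalgebra
open Finset.HasAntidiagonal (antidiagonal mem_antidiagonal)

variable {k H : Type*} [CommRing k]

section HopfAlgebra

variable [Ring H] [HopfAlgebra k H] {π : ℕ → H →ₗ[k] H}

lemma toConv_xiA (π : ℕ → H →ₗ[k] H) (α : List ℕ) :
    toConv (xiA π α) = (α.map fun a => toConv (π a)).prod := by
  induction α with
  | nil => rfl
  | cons a t ih =>
    rw [List.map_cons, List.prod_cons, ← ih]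
    rfl

lemma toConv_xiA_append (π : ℕ → H →ₗ[k] H) (α β : List ℕ) :
    toConv (xiA π (α ++ β)) = toConv (xiA π α) * toConv (xiA π β) := by
  simp only [toConv_xiA, List.map_append, List.prod_append]

lemma xiA_nil_apply (π : ℕ → H →ₗ[k] H) (h : H) :
    xiA π [] h = algebraMap k H (counit h) :=
  rfl

lemma xiA_cons_apply {ι : Type*} (π : ℕ → H →ₗ[k] H) (a : ℕ) (t : List ℕ) {h : H}
    (r : Repr k h ι) : xiA π (a :: t) h = ∑ i ∈ r.index, π a (r.left i) * xiA π t (r.right i) :=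
  r.convMul_apply (toConv (π a)) (toConv (xiA π t))

lemma xiA_eraseZeros (hπ_zero : toConv (π 0) = 1) (l : List ℕ) :
    xiA π (eraseZeros l) = xiA π l := by
  refine toConv_injective ?_
  simp only [toConv_xiA, eraseZeros]
  induction l with
  | nil => rfl
  | cons a t ih => by_cases ha : a = 0 <;> simp_all

lemma xiA_one_of_isComposition (hπ_one : ∀ c, 0 < c → π c 1 = 0) {γ : List ℕ}
    (hγ : IsComposition γ) : xiA π γ 1 = if γ = [] then 1 else 0 := by
  cases γ with
  | nil => simp [xiA_nil_apply]
  | cons c t =>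
    simp [xiA, Algebra.TensorProduct.one_def, hπ_one c (isComposition_cons.1 hγ).1]

end HopfAlgebra

section CommHopfAlgebra

variable [CommRing H] [HopfAlgebra k H] {π : ℕ → H →ₗ[k] H}

lemma xiA_mul (hπ_mul : ∀ c x y, π c (x * y) = ∑ p ∈ antidiagonal c, π p.1 x * π p.2 y)
    (γ : List ℕ) (x y : H) :
    xiA π γ (x * y) =
      ∑ w ∈ splittings γ, xiA π (w.map Prod.fst) x * xiA π (w.map Prod.snd) y := by
  induction γ generalizing x y with
  | nil => simp [sum_splittings_nil, xiA_nil_apply]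
  | cons c t ih =>
    simp only [xiA_cons_apply π c t ((ℛ k x).mul (ℛ k y)), sum_splittings_cons, List.map_cons,
      xiA_cons_apply π _ _ (ℛ k x), xiA_cons_apply π _ _ (ℛ k y), Repr.mul_index, Repr.mul_left,
      Repr.mul_right, hπ_mul, ih, Finset.sum_mul_sum]
    rw [Finset.sum_comm]
    refine Finset.sum_congr rfl fun p _ => ?_
    rw [Finset.sum_comm]
    refine Finset.sum_congr rfl fun w _ => ?_
    simp only [Finset.sum_product, mul_mul_mul_comm]

lemma sum_splittings_xiA_antipode_mul_xiA (hπ_zero : toConv (π 0) = 1)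
    (hπ_one : ∀ c, 0 < c → π c 1 = 0)
    (hπ_mul : ∀ c x y, π c (x * y) = ∑ p ∈ antidiagonal c, π p.1 x * π p.2 y)
    {γ : List ℕ} (hγ : IsComposition γ) :
    ∑ w ∈ splittings γ, toConv (xiA π (splittingParts w).1 ∘ₗ HopfAlgebra.antipode k) *
        toConv (xiA π (splittingParts w).2) = if γ = [] then 1 else 0 := by
  refine ofConv_injective (LinearMap.ext fun h => ?_)
  calc
    _ = ∑ w ∈ splittings γ, ∑ i ∈ (ℛ k h).index,
          xiA π (w.map Prod.fst) (HopfAlgebra.antipode k ((ℛ k h).left i)) *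
            xiA π (w.map Prod.snd) ((ℛ k h).right i) := by
      simp only [splittingParts, xiA_eraseZeros hπ_zero, WithConv.ofConv_sum, LinearMap.sum_apply]
      exact Finset.sum_congr rfl fun w _ => (ℛ k h).convMul_apply _ _
    _ = xiA π γ (∑ i ∈ (ℛ k h).index,
          HopfAlgebra.antipode k ((ℛ k h).left i) * (ℛ k h).right i) := by
      rw [Finset.sum_comm, map_sum]
      exact Finset.sum_congr rfl fun i _ => (xiA_mul hπ_mul γ _ _).symm
    _ = counit (R := k) h • if γ = [] then (1 : H) else 0 := by
      rw [HopfAlgebra.sum_antipode_mul_eq_smul, map_smul, xiA_one_of_isComposition hπ_one hγ]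
    _ = _ := by
      split_ifs
      · exact (Algebra.algebraMap_eq_smul_one _).symm
      · exact smul_zero _

theorem sum_xiA_antipode_tmul_Mq {SQ : QSymM k →ₗ[k] QSymM k}
    (hSQ : mulQ k ∘ₗ TensorProduct.map SQ LinearMap.id ∘ₗ comulQ k = unitQ k ∘ₗ counitQ k)
    (hπ_zero : toConv (π 0) = 1) (hπ_one : ∀ c, 0 < c → π c 1 = 0)
    (hπ_mul : ∀ c x y, π c (x * y) = ∑ p ∈ antidiagonal c, π p.1 x * π p.2 y)
    (n : ℕ) (h : H) :
    ∑ α ∈ compositionLists n, xiA π α (HopfAlgebra.antipode k h) ⊗ₜ[k] Mq k α =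
      ∑ α ∈ compositionLists n, xiA π α h ⊗ₜ[k] SQ (Mq k α) := by
  let evalAt : WithConv (H →ₗ[k] H) →ₗ[k] H :=
    LinearMap.applyₗ h ∘ₗ (WithConv.linearEquiv k _).toLinearMap
  have hseries := qsymSeries_eq_lTensor_antipode hSQ (f := fun α => toConv (xiA π α))
    (g := fun α => toConv (xiA π α ∘ₗ HopfAlgebra.antipode k)) rfl (toConv_xiA_append π)
    (fun γ => sum_splittings_xiA_antipode_mul_xiA hπ_zero hπ_one hπ_mul) n
  have hsum := congrArg (evalAt.rTensor (QSymM k)) hseries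
  simp only [qsymSeries, map_sum, LinearMap.lTensor_tmul, LinearMap.rTensor_tmul] at hsum
  exact hsum

end CommHopfAlgebra

section Grading

lemma linearMap_ext_of_iSup_eq_top {ι R M N : Type*} [Semiring R] [AddCommMonoid M] [Module R M]
    [AddCommMonoid N] [Module R N] {ℳ : ι → Submodule R M} (hℳ : ⨆ i, ℳ i = ⊤)
    {f g : M →ₗ[R] N} (h : ∀ i, ∀ x ∈ ℳ i, f x = g x) : f = g :=
  LinearMap.eqLocus_eq_top.1 (top_le_iff.1 (hℳ ▸ iSup_le h))

/-- The maps `π n` are the projections of a module onto the pieces `ℋ n` of a grading. -/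
def IsGradedProjection [AddCommGroup H] [Module k H] (ℋ : ℕ → Submodule k H)
    (π : ℕ → H →ₗ[k] H) : Prop :=
  ∀ n m : ℕ, ∀ h ∈ ℋ m, π n h = if n = m then h else 0

/-- The comultiplication is graded: it maps `ℋ n` into the sum of the images of `ℋ i ⊗ ℋ j` with
`i + j = n`. -/
def IsGradedComul [AddCommGroup H] [Module k H] [Coalgebra k H] (ℋ : ℕ → Submodule k H) : Prop :=
  ∀ n : ℕ, ∀ h ∈ ℋ n, comul (R := k) h ∈ ⨆ (p : ℕ × ℕ) (_ : p.1 + p.2 = n),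
    LinearMap.range (TensorProduct.mapIncl (ℋ p.1) (ℋ p.2))

lemma IsGradedComul.convMul_apply_eq {C A : Type*} [AddCommGroup C] [Module k C] [Coalgebra k C]
    [Ring A] [Algebra k A] {𝒞 : ℕ → Submodule k C} (h𝒞 : IsGradedComul 𝒞)
    {f g f' g' : WithConv (C →ₗ[k] A)} {n : ℕ}
    (hfg : ∀ i j, i + j = n → ∀ x ∈ 𝒞 i, ∀ y ∈ 𝒞 j, f x * g y = f' x * g' y)
    {c : C} (hc : c ∈ 𝒞 n) : (f * g) c = (f' * g') c := by
  let F := LinearMap.mul' k A ∘ₗ TensorProduct.map f.ofConv g.ofConv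
  let F' := LinearMap.mul' k A ∘ₗ TensorProduct.map f'.ofConv g'.ofConv
  suffices hle : ⨆ (p : ℕ × ℕ) (_ : p.1 + p.2 = n),
      LinearMap.range (TensorProduct.mapIncl (𝒞 p.1) (𝒞 p.2)) ≤ LinearMap.eqLocus F F' from
    hle (h𝒞 n c hc)
  refine iSup₂_le fun p hp => ?_
  rintro _ ⟨z, rfl⟩
  induction z using TensorProduct.induction_on with
  | zero => simp
  | tmul x y => exact hfg p.1 p.2 hp x x.2 y y.2
  | add x y hx hy => exact map_add (TensorProduct.mapIncl _ _) x y ▸ add_mem hx hy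

lemma IsGradedProjection.apply_mul [Ring H] [Algebra k H] {ℋ : ℕ → Submodule k H}
    {π : ℕ → H →ₗ[k] H} (hℋ : ⨆ n, ℋ n = ⊤) (hℋ_mul : ∀ i j : ℕ, ℋ i * ℋ j ≤ ℋ (i + j))
    (hπ : IsGradedProjection ℋ π) (c : ℕ) (x y : H) :
    π c (x * y) = ∑ p ∈ antidiagonal c, π p.1 x * π p.2 y := by
  have hbilinear : (LinearMap.mul k H).compr₂ (π c) =
      ∑ p ∈ antidiagonal c, (LinearMap.mul k H).compl₁₂ (π p.1) (π p.2) := by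
    refine linearMap_ext_of_iSup_eq_top hℋ fun i x hx =>
      linearMap_ext_of_iSup_eq_top hℋ fun j y hy => ?_
    have hterm : ∀ p : ℕ × ℕ, π p.1 x * π p.2 y = if (i, j) = p then x * y else 0 := by
      intro p
      rw [hπ p.1 i x hx, hπ p.2 j y hy]
      grind
    have hxy := hℋ_mul i j (Submodule.mul_mem_mul hx hy)
    simp [LinearMap.sum_apply, hterm, hπ c (i + j) _ hxy, eq_comm]
  simpa [LinearMap.sum_apply] using LinearMap.congr_fun₂ hbilinear x y

-- With `e` the convolution unit: on `ℋ n`, `π 0 = π 0 ⋆ e` and `e = e ⋆ (e ∘ π n)`, and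
-- connectedness makes the two convolutions agree on each `ℋ i ⊗ ℋ j`.
lemma IsGradedProjection.toConv_zero_eq_one [Ring H] [Bialgebra k H]
    {ℋ : ℕ → Submodule k H} {π : ℕ → H →ₗ[k] H} (hℋ : ⨆ n, ℋ n = ⊤)
    (hℋ_zero : ℋ 0 ≤ LinearMap.range (Algebra.linearMap k H)) (hℋ_comul : IsGradedComul ℋ)
    (hπ : IsGradedProjection ℋ π) : toConv (π 0) = 1 := by
  let e : H →ₗ[k] H := Algebra.linearMap k H ∘ₗ counit
  have he : ∀ x ∈ ℋ 0, e x = x := by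
    intro x hx
    obtain ⟨r, rfl⟩ := hℋ_zero hx
    simp [e]
  have hterm : ∀ n i j, i + j = n → ∀ x ∈ ℋ i, ∀ y ∈ ℋ j,
      π 0 x * e y = e x * e (π n y) := by
    intro n i j hij x hx y hy
    rcases Nat.eq_zero_or_pos i with rfl | hi
    · rw [hπ 0 0 x hx, hπ n j y hy, if_pos rfl, if_pos (by lia), he x hx]
    · rw [hπ 0 i x hx, hπ n j y hy, if_neg (by lia), if_neg (by lia), zero_mul, map_zero,
        mul_zero]
  refine ofConv_injective (linearMap_ext_of_iSup_eq_top hℋ fun n h hh => ?_)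
  calc
    π 0 h = (toConv (π 0) * toConv e) h := (LinearMap.congr_fun
      (congrArg ofConv (mul_one (toConv (π 0)))) h).symm
    _ = (toConv e * toConv (e ∘ₗ π n)) h := hℋ_comul.convMul_apply_eq (hterm n) hh
    _ = e (π n h) := LinearMap.congr_fun (congrArg ofConv (one_mul (toConv (e ∘ₗ π n)))) h
    _ = e h := by rw [hπ n n h hh, if_pos rfl]

variable [Ring H] [HopfAlgebra k H] {ℋ : ℕ → Submodule k H} {π : ℕ → H →ₗ[k] H}

lemma xiA_eq_zero_of_mem (hℋ_comul : IsGradedComul ℋ) (hπ : IsGradedProjection ℋ π)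
    (hπ_zero : toConv (π 0) = 1) {α : List ℕ} {n : ℕ} (hn : n ≠ α.sum) {h : H} (hh : h ∈ ℋ n) :
    xiA π α h = 0 := by
  induction α generalizing n h with
  | nil =>
    have hxi : π 0 = xiA π [] := congrArg ofConv hπ_zero
    rw [← hxi, hπ 0 n h hh]
    exact if_neg hn.symm
  | cons a t ih =>
    suffices hzero : (toConv (π a) * toConv (xiA π t)) h = (0 * 0 : WithConv (H →ₗ[k] H)) h by
      rw [mul_zero] at hzero
      exact hzero
    refine hℋ_comul.convMul_apply_eq (fun i j hij x hx y hy => ?_) hh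
    change π a x * xiA π t y = 0 * 0
    rw [hπ a i x hx, mul_zero]
    split_ifs with hai
    · rw [ih (by rw [List.sum_cons] at hn; lia) hy, mul_zero]
    · rw [zero_mul]

lemma exists_forall_lt_sum_xiA_eq_zero (hℋ : ⨆ n, ℋ n = ⊤) (hℋ_comul : IsGradedComul ℋ)
    (hπ : IsGradedProjection ℋ π) (hπ_zero : toConv (π 0) = 1) (h : H) :
    ∃ N, ∀ α : List ℕ, N < α.sum → xiA π α h = 0 := by
  have hh : h ∈ ⨆ n, ℋ n := hℋ ▸ Submodule.mem_top
  induction hh using Submodule.iSup_induction' with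
  | mem n x hx => exact ⟨n, fun α hα => xiA_eq_zero_of_mem hℋ_comul hπ hπ_zero hα.ne hx⟩
  | zero => exact ⟨0, fun α _ => map_zero _⟩
  | add x y _ _ hx hy =>
    obtain ⟨N, hN⟩ := hx
    obtain ⟨M, hM⟩ := hy
    refine ⟨max N M, fun α hα => ?_⟩
    rw [map_add, hN α (by lia), hM α (by lia), add_zero]

end Grading

end BernsteinCoefficients

/-- Let `H` be a commutative connected graded `k`-Hopf algebra (grading `ℋ`, graded projections
`π`), with Bernstein homomorphism `β_H : H → H ⊗ QSym`, `β_H(h) = ∑_α ξ_α(h) ⊗ M_α`, where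
`ξ_α = m^{(m-1)} ∘ π_α ∘ Δ^{(m-1)}`.  Let `S_QSym = SQ` be the antipode of `QSym` (a linear map
satisfying the two antipode identities for the bialgebra `QSym`).  Then
`β_H ∘ S_H = (id_H ⊗ S_QSym) ∘ β_H`. -/
theorem bernstein_comm_antipode {k H : Type*} [CommRing k] [CommRing H]
    [HopfAlgebra k H]
    (ℋ : ℕ → Submodule k H) (π : ℕ → H →ₗ[k] H)
    (hdec : DirectSum.IsInternal ℋ)
    (hconn : ℋ 0 = LinearMap.range (Algebra.linearMap k H))
    (hπ : ∀ n m : ℕ, ∀ h ∈ ℋ m, π n h = if n = m then h else 0)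
    (hgmul : ∀ i j : ℕ, ℋ i * ℋ j ≤ ℋ (i + j))
    (hgcomul : ∀ n : ℕ, ∀ h ∈ ℋ n, Coalgebra.comul (R := k) h ∈
      ⨆ (p : ℕ × ℕ) (_ : p.1 + p.2 = n),
        LinearMap.range (TensorProduct.mapIncl (ℋ p.1) (ℋ p.2)))
    (SQ : QSymM k →ₗ[k] QSymM k)
    (hSQ₁ : mulQ k ∘ₗ TensorProduct.map SQ LinearMap.id ∘ₗ comulQ k = unitQ k ∘ₗ counitQ k)
    (hSQ₂ : mulQ k ∘ₗ TensorProduct.map LinearMap.id SQ ∘ₗ comulQ k = unitQ k ∘ₗ counitQ k) :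
    ∀ h : H,
      ∑ᶠ α ∈ {α : List ℕ | IsComposition α},
          xiA π α (HopfAlgebra.antipode (R := k) h) ⊗ₜ[k] Mq k α =
        ∑ᶠ α ∈ {α : List ℕ | IsComposition α}, xiA π α h ⊗ₜ[k] SQ (Mq k α) := by
  intro h
  have hℋ := hdec.submodule_iSup_eq_top
  have hπ_zero := IsGradedProjection.toConv_zero_eq_one hℋ hconn.le hgcomul hπ
  have hπ_one : ∀ c, 0 < c → π c 1 = 0 := fun c hc =>
    (hπ c 0 1 (hconn ▸ ⟨1, map_one (algebraMap k H)⟩)).trans (if_neg hc.ne')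
  have hπ_mul := IsGradedProjection.apply_mul hℋ hgmul hπ
  obtain ⟨N, hN⟩ := exists_forall_lt_sum_xiA_eq_zero hℋ hgcomul hπ hπ_zero h
  obtain ⟨M, hM⟩ := exists_forall_lt_sum_xiA_eq_zero hℋ hgcomul hπ hπ_zero
    (HopfAlgebra.antipode k h)
  rw [finsum_mem_isComposition (max N M) fun α hα => by
      rw [hM α (lt_of_le_of_lt (le_max_right N M) hα), TensorProduct.zero_tmul],
    finsum_mem_isComposition (max N M) fun α hα => by
      rw [hN α (lt_of_le_of_lt (le_max_left N M) hα), TensorProduct.zero_tmul]]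
  exact Finset.sum_congr rfl fun n _ => sum_xiA_antipode_tmul_Mq hSQ₁ hπ_zero hπ_one hπ_mul n h
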